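/- Let (a_1, ..., a_n) be a sequence of positive integers with M(a_1, ..., a_n) = −Id (a solution of Problem II). Then a_i ≤ n − 2 for every index i. -/

import Mathlib

open Matrix

def elemMat (a : ℤ) : Matrix (Fin 2) (Fin 2) ℤ := !![a, -1; 1, 0]

/-- `M (a₁ :: ... :: aₙ)` is the product `E(aₙ) ⋯ E(a₁)` with the factor for `a₁` rightmost. -/
def M : List ℤ → Matrix (Fin 2) (Fin 2) ℤ
  | [] => 1
  | a :: t => M t * elemMat a

/-!
Let `v₋₁ = (0, -1)`, `v₀ = (1, 0)` and `vᵢ = aᵢ vᵢ₋₁ - vᵢ₋₂`, so that `M (a₁ :: ... :: aₘ)` has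
columns `vₘ` and `-vₘ₋₁`. Consecutive points have determinant `1`, hence the slope (second
coordinate over first) changes from `vᵢ₋₁` to `vᵢ` by the reciprocal of a nonzero integer when
neither is vertical, so it grows by at most `1`, while from `vᵢ₋₂` to `vᵢ` across a vertical `vᵢ₋₁`
it drops by exactly `aᵢ ≥ 0`. If `M (x :: t) = ±1`, then the path of `t` ends with a point of slope
`x` followed by a vertical one, so slope `x` was reached from slope `0` in `t.length - 1` steps,
whence `x ≤ t.length - 1`. Being `±1` is invariant under rotation of the list, so every entry may be
taken to be the first.
-/

theorem M_cons_apply_zero (a : ℤ) (t : List ℤ) (i : Fin 2) :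
    M (a :: t) i 0 = a * M t i 0 + M t i 1 := by
  simp [M, elemMat, Matrix.mul_apply, mul_comm]

theorem M_cons_apply_one (a : ℤ) (t : List ℤ) (i : Fin 2) : M (a :: t) i 1 = -M t i 0 := by
  simp [M, elemMat, Matrix.mul_apply]

theorem M_append (s t : List ℤ) : M (s ++ t) = M t * M s := by
  induction s with
  | nil => simp [M]
  | cons a s ih => simp [M, ih, Matrix.mul_assoc]

theorem det_M (t : List ℤ) : (M t).det = 1 := by
  induction t with
  | nil => simp [M]
  | cons a t ih => simp [M, elemMat, ih]

theorem mul_eq_neg_one_comm {R : Type*} [Monoid R] [HasDistribNeg R] [IsDedekindFiniteMonoid R]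
    {a b : R} : a * b = -1 ↔ b * a = -1 := by
  rw [← neg_eq_iff_eq_neg, ← neg_mul, mul_eq_one_comm, mul_neg, neg_eq_iff_eq_neg]

theorem M_append_comm_eq_one_or_neg_one {s t : List ℤ} :
    M (s ++ t) = 1 ∨ M (s ++ t) = -1 ↔ M (t ++ s) = 1 ∨ M (t ++ s) = -1 := by
  rw [M_append, M_append, mul_eq_one_comm, mul_eq_neg_one_comm]

/-- The vector `(d, n)` has slope `n / d` at most `k`. Clearing the denominator makes every vertical
vector `(0, n)` satisfy this for all `k`. -/
def SlopeLE (d n k : ℤ) : Prop := n * d ≤ k * d ^ 2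

theorem SlopeLE.neg {d n k : ℤ} (h : SlopeLE d n k) : SlopeLE (-d) (-n) k := by
  simpa [SlopeLE] using h

theorem SlopeLE.mono {d n k k' : ℤ} (h : SlopeLE d n k) (hk : k ≤ k') : SlopeLE d n k' :=
  le_trans h (by gcongr)

theorem SlopeLE.succ_of_det_eq_one {d n d' n' k : ℤ} (h : SlopeLE d n k) (hd : d ≠ 0)
    (hdet : d * n' - d' * n = 1) : SlopeLE d' n' (k + 1) := by
  have hd2 : 0 < d ^ 2 := by positivity
  refine le_of_mul_le_mul_left ?_ hd2
  calc d ^ 2 * (n' * d')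
      = n * d * d' ^ 2 + d * d' := by linear_combination d * d' * hdet
    _ ≤ k * d ^ 2 * d' ^ 2 + (d * d') ^ 2 :=
      add_le_add (mul_le_mul_of_nonneg_right h (sq_nonneg d')) (Int.le_self_sq _)
    _ = d ^ 2 * ((k + 1) * d' ^ 2) := by ring

theorem SlopeLE.add_of_vertical {n d' n' a k : ℤ} (h : SlopeLE d' n' k) (ha : 0 ≤ a)
    (hdet : n * d' = -1) : SlopeLE d' (a * n + n') k :=
  calc (a * n + n') * d' = n' * d' - a := by linear_combination a * hdet
    _ ≤ n' * d' := by linarith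
    _ ≤ k * d' ^ 2 := h

theorem slopeLE_M_columns (t : List ℤ) (ht : ∀ a ∈ t, 0 ≤ a) :
    SlopeLE (M t 0 0) (M t 1 0) t.length ∧ SlopeLE (M t 0 1) (M t 1 1) (t.length - 1) := by
  induction t with
  | nil => simp [M, SlopeLE]
  | cons a t ih =>
    obtain ⟨ha, ht⟩ := List.forall_mem_cons.mp ht
    obtain ⟨hcur, hprev⟩ := ih ht
    have hdet : M t 0 0 * M t 1 1 - M t 0 1 * M t 1 0 = 1 :=
      (det_fin_two (M t)).symm.trans (det_M t)
    simp only [M_cons_apply_zero, M_cons_apply_one, List.length_cons, Nat.cast_add, Nat.cast_one,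
      add_sub_cancel_right]
    refine ⟨?_, hcur.neg⟩
    rcases eq_or_ne (M t 0 0) 0 with hd | hd
    · rw [hd, mul_zero, zero_add]
      exact (hprev.add_of_vertical ha (by linear_combination M t 1 1 * hd - hdet)).mono (by omega)
    · exact hcur.succ_of_det_eq_one hd (by linear_combination hdet)

theorem head_le_of_M_cons_eq_one_or_neg_one {x : ℤ} {t : List ℤ} (ht : ∀ a ∈ t, 0 ≤ a)
    (h : M (x :: t) = 1 ∨ M (x :: t) = -1) : x ≤ (t.length : ℤ) - 1 := by
  have hprev := (slopeLE_M_columns t ht).2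
  have hentry (i j : Fin 2) (hij : i ≠ j) : M (x :: t) i j = 0 := by
    rcases h with h | h <;> simp [h, hij]
  have hvert : M t 0 0 = 0 := by simpa [M_cons_apply_one] using hentry 0 1 (by decide)
  have hslope : M t 1 1 = -(x * M t 1 0) := by
    linarith [hentry 1 0 (by decide), M_cons_apply_zero x t 1]
  have hdet : M t 1 0 * M t 0 1 = -1 := by
    linear_combination M t 1 1 * hvert - (det_fin_two (M t)).symm.trans (det_M t)
  have hsq : M t 0 1 ^ 2 = 1 :=
    Int.isUnit_sq (IsUnit.of_mul_eq_one (-M t 1 0) (by linear_combination -hdet))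
  calc x = M t 1 1 * M t 0 1 := by rw [hslope]; linear_combination x * hdet
    _ ≤ (t.length - 1) * M t 0 1 ^ 2 := hprev
    _ = t.length - 1 := by rw [hsq, mul_one]

theorem problemII_entry_bound_general (l : List ℤ) (hnonneg : ∀ x ∈ l, 0 ≤ x)
    (h : M l = 1 ∨ M l = -1) : ∀ x ∈ l, x ≤ (l.length : ℤ) - 2 := by
  intro x hx
  obtain ⟨s, t, rfl⟩ := List.append_of_mem hx
  have hrot : M (x :: (t ++ s)) = 1 ∨ M (x :: (t ++ s)) = -1 :=
    M_append_comm_eq_one_or_neg_one.mp h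
  have hle : x ≤ ((t ++ s).length : ℤ) - 1 :=
    head_le_of_M_cons_eq_one_or_neg_one (fun a ha => hnonneg a (by grind)) hrot
  grind

/-- For a solution of Problem II, every entry satisfies `aᵢ ≤ n - 2`. -/
theorem problemII_entry_bound (l : List ℤ) (hpos : ∀ x ∈ l, 0 < x)
    (h : M l = -1) :
    ∀ x ∈ l, x ≤ (l.length : ℤ) - 2 :=
  problemII_entry_bound_general l (fun x hx => (hpos x hx).le) (Or.inr h)
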